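/- arXiv:2402.03209 — 2 statements merged into one kernel-verified Lean document; each statement's English description precedes it below -/
import Mathlib

section
/- Fix an integer n ≥ 2. For θ ∈ ℝ let γ(θ) be the n×n real matrix whose upper-left 2×2 block is [[sin θ, cos θ], [−cos θ, sin θ]], whose remaining diagonal entries all equal 1, and whose all other entries are 0. Then each γ(θ) is a special orthogonal matrix (γ(θ)ᵀ·γ(θ) = 1 and det γ(θ) = 1), γ(0) = γ(2π), and the loop θ ↦ γ(θ) for θ ∈ [0, 2π], regarded as a loop based at γ(0) in the topological space SO(n) of special orthogonal n×n real matrices (with the subspace topology from the space of matrices), is not path-homotopic relative to its endpoints to the constant loop at γ(0). -/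
/-!
The proof constructs the spin lift by hand. On `ℝ^(2^n)`, with basis the subsets of `Fin n`, there
are (Jordan–Wigner) matrices `cliffC i`, `cliffD i`, `i : Fin n`, that pairwise anticommute, with
`cliffC i ^ 2 = 1`, and whose common commutant consists of the scalars. A matrix `a` is an
*intertwiner* over `g` (`Intertwines a g`) if `a * cliffC i = (∑ k, g k i • cliffC k) * a` and `a`
commutes with all `cliffD i`. Intertwiners multiply along with their `g`s, and an intertwiner
over `1` is a scalar.

For orthogonal `g`, averaging the matrix `1` produces an intertwiner `spinAvg g (List.finRange n)`
depending continuously on `g` and equal to `2 ^ n` at `g = 1`; so it is invertible for `g` near `1`.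
Given a homotopy `H` on the square, the quotients `H (r x) * (H (r' x))ᵀ` are uniformly close to `1`
when `r` is close to `r'`, so multiplying finitely many averaged intertwiners along the ray from
`0` to `x` gives a continuous invertible intertwiner `F x` over `H x * (H 0)ᵀ`
(`exists_continuous_lift`).

If `H` contracts the loop, then `F` is a nonzero scalar on the three sides of the square where `H`
is constant, so it has the same sign at both ends of the fourth side. On the fourth side, the
rotation by `θ` also has the explicit intertwiner `cos (θ/2) - sin (θ/2) cliffC 0 cliffC 1` (up to a
shift of the angle), which changes sign between `θ = 0` and `θ = 2π`, and `F` differs from it by a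
nonvanishing continuous scalar. The two conclusions contradict each other.
-/

open Real Matrix

/-- The loop of matrices: upper-left 2×2 block `[[sin θ, cos θ], [−cos θ, sin θ]]`,
remaining diagonal entries `1`, all other entries `0`. -/
noncomputable def soLoop (n : ℕ) (θ : ℝ) : Matrix (Fin n) (Fin n) ℝ :=
  Matrix.of fun i j =>
    if (i : ℕ) = 0 ∧ (j : ℕ) = 0 then Real.sin θ
    else if (i : ℕ) = 0 ∧ (j : ℕ) = 1 then Real.cos θ
    else if (i : ℕ) = 1 ∧ (j : ℕ) = 0 then -Real.cos θ
    else if (i : ℕ) = 1 ∧ (j : ℕ) = 1 then Real.sin θ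
    else if (i : ℕ) = (j : ℕ) then 1 else 0

open scoped symmDiff

/-! ### Jordan–Wigner matrices -/

/-- The character `S ↦ ∏ j ∈ S, f j` of the group of subsets of `Fin n` under symmetric difference
(a character when `f` takes the values `±1`). -/
noncomputable def subsetChar {n : ℕ} (f : Fin n → ℝ) (S : Finset (Fin n)) : ℝ := ∏ j ∈ S, f j

theorem subsetChar_symmDiff {n : ℕ} (f : Fin n → ℝ) (hf : ∀ j, f j * f j = 1)
    (S : Finset (Fin n)) (i : Fin n) :
    subsetChar f (S ∆ {i}) = f i * subsetChar f S := by
  unfold subsetChar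
  by_cases h : i ∈ S
  · have : S ∆ {i} = S.erase i := by
      ext x; by_cases hx : x = i <;> simp [Finset.mem_symmDiff, hx, h]
    rw [this, ← Finset.mul_prod_erase S f h, ← mul_assoc, hf, one_mul]
  · have : S ∆ {i} = insert i S := by
      ext x; by_cases hx : x = i <;> simp [Finset.mem_symmDiff, hx, h]
    rw [this, Finset.prod_insert h]

theorem subsetChar_mul_self {n : ℕ} (f : Fin n → ℝ) (hf : ∀ j, f j * f j = 1)
    (S : Finset (Fin n)) : subsetChar f S * subsetChar f S = 1 := by
  unfold subsetChar
  rw [← Finset.prod_mul_distrib]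
  exact Finset.prod_eq_one fun j _ => hf j

theorem symmDiff_single_single {n : ℕ} (S : Finset (Fin n)) (i : Fin n) : S ∆ {i} ∆ {i} = S := by
  rw [symmDiff_assoc, symmDiff_self, symmDiff_bot]

/-- The matrices on `ℝ^(2^n)`. -/
abbrev SpinMat (n : ℕ) := Matrix (Finset (Fin n)) (Finset (Fin n)) ℝ

/-- The signed flip of the membership of `i`, with sign given by `subsetChar f`. -/
noncomputable def flipMat {n : ℕ} (i : Fin n) (f : Fin n → ℝ) : SpinMat n :=
  Matrix.of fun S T => if T = S ∆ {i} then subsetChar f S else 0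

theorem flipMat_mul_apply {n : ℕ} (i : Fin n) (f : Fin n → ℝ) (M : SpinMat n)
    (S T : Finset (Fin n)) : (flipMat i f * M) S T = subsetChar f S * M (S ∆ {i}) T := by
  simp [Matrix.mul_apply, flipMat]

theorem mul_flipMat_apply {n : ℕ} (i : Fin n) (f : Fin n → ℝ) (M : SpinMat n)
    (S T : Finset (Fin n)) :
    (M * flipMat i f) S T = M S (T ∆ {i}) * subsetChar f (T ∆ {i}) := by
  have key : ∀ U : Finset (Fin n), T = U ∆ {i} ↔ U = T ∆ {i} := by
    intro U
    constructor <;> rintro rfl <;> rw [symmDiff_single_single]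
  simp [Matrix.mul_apply, flipMat, key]

theorem flipMat_mul_flipMat {n : ℕ} (i j : Fin n) (f g : Fin n → ℝ) (hg : ∀ j, g j * g j = 1)
    (hf : ∀ j, f j * f j = 1) :
    flipMat i f * flipMat j g = (g i * f j) • (flipMat j g * flipMat i f) := by
  ext S T
  rw [Matrix.smul_apply, flipMat_mul_apply, flipMat_mul_apply]
  simp only [flipMat, Matrix.of_apply]
  rw [subsetChar_symmDiff g hg, subsetChar_symmDiff f hf, symmDiff_right_comm S {i} {j}]
  split_ifs
  · have := hf j
    simp only [smul_eq_mul]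
    linear_combination (-(g i * subsetChar f S * subsetChar g S)) * this
  · simp

theorem flipMat_mul_self {n : ℕ} (i : Fin n) (f : Fin n → ℝ) (hf : ∀ j, f j * f j = 1)
    (hi : f i = 1) : flipMat i f * flipMat i f = 1 := by
  ext S T
  rw [flipMat_mul_apply]
  simp only [flipMat, Matrix.of_apply]
  rw [subsetChar_symmDiff f hf, symmDiff_single_single, hi, one_mul, Matrix.one_apply]
  simp only [eq_comm (a := T)]
  split_ifs
  · exact subsetChar_mul_self f hf S
  · simp

/-- The sign pattern of `cliffC i`. -/
noncomputable def signC {n : ℕ} (i j : Fin n) : ℝ := if j < i then -1 else 1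

/-- The sign pattern of `cliffD i`. -/
noncomputable def signD {n : ℕ} (i j : Fin n) : ℝ := if j ≤ i then -1 else 1

theorem signC_mul_self {n : ℕ} (i j : Fin n) : signC i j * signC i j = 1 := by
  unfold signC; split_ifs <;> norm_num

theorem signD_mul_self {n : ℕ} (i j : Fin n) : signD i j * signD i j = 1 := by
  unfold signD; split_ifs <;> norm_num

/-- The Clifford generators that the orthogonal group acts on. -/
noncomputable def cliffC {n : ℕ} (i : Fin n) : SpinMat n := flipMat i (signC i)

/-- The complementary Clifford generators, of square `-1`, which the orthogonal group fixes. -/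
noncomputable def cliffD {n : ℕ} (i : Fin n) : SpinMat n := flipMat i (signD i)

theorem cliffC_mul_self {n : ℕ} (i : Fin n) : cliffC i * cliffC i = 1 :=
  flipMat_mul_self i _ (signC_mul_self i) (by simp [signC])

theorem cliffC_mul_cliffC {n : ℕ} {i j : Fin n} (h : i ≠ j) :
    cliffC i * cliffC j = -(cliffC j * cliffC i) := by
  unfold cliffC
  rw [flipMat_mul_flipMat i j _ _ (signC_mul_self j) (signC_mul_self i)]
  have : signC j i * signC i j = -1 := by
    unfold signC
    rcases lt_or_gt_of_ne h with h | h <;> simp [h, h.not_gt]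
  rw [this, neg_one_smul]

theorem cliffC_mul_cliffD {n : ℕ} (i j : Fin n) :
    cliffC i * cliffD j = -(cliffD j * cliffC i) := by
  unfold cliffC cliffD
  rw [flipMat_mul_flipMat i j _ _ (signD_mul_self j) (signC_mul_self i)]
  have : signD j i * signC i j = -1 := by
    unfold signC signD
    by_cases h : i ≤ j
    · simp [h, h.not_gt]
    · simp [h, lt_of_not_ge h]
  rw [this, neg_one_smul]

/-- The product `cliffD i * cliffC i` is diagonal, with sign detecting whether `i ∈ S`. -/
theorem mul_cliffD_mul_cliffC_apply {n : ℕ} (i : Fin n) (M : SpinMat n) (S T : Finset (Fin n)) :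
    (M * (cliffD i * cliffC i)) S T = M S T * (if i ∈ T then -1 else 1) ∧
    ((cliffD i * cliffC i) * M) S T = (if i ∈ S then -1 else 1) * M S T := by
  have key : ∀ U : Finset (Fin n),
      subsetChar (signD i) U * subsetChar (signC i) U = if i ∈ U then -1 else 1 := by
    intro U
    unfold subsetChar
    rw [← Finset.prod_mul_distrib]
    have : ∀ j ∈ U, signD i j * signC i j = if i = j then -1 else 1 := by
      intro j _
      unfold signC signD
      rcases lt_trichotomy i j with h | h | h
      · simp [h.not_ge, h.not_gt, h.ne]
      · simp [h]
      · simp [h, h.le, h.ne']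
    rw [Finset.prod_congr rfl this, Finset.prod_ite_eq]
  constructor
  · unfold cliffC cliffD
    rw [← mul_assoc, mul_flipMat_apply, mul_flipMat_apply, symmDiff_single_single, ← key T,
      subsetChar_symmDiff _ (signC_mul_self i)]
    simp only [signC, lt_self_iff_false, if_false]
    ring
  · unfold cliffC cliffD
    rw [mul_assoc, flipMat_mul_apply, flipMat_mul_apply, symmDiff_single_single, ← key S,
      subsetChar_symmDiff _ (signC_mul_self i)]
    simp only [signC, lt_self_iff_false, if_false]
    ring

theorem eq_smul_one_of_commute {n : ℕ} (M : SpinMat n) (hC : ∀ i, M * cliffC i = cliffC i * M)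
    (hD : ∀ i, M * cliffD i = cliffD i * M) : M = M ∅ ∅ • (1 : SpinMat n) := by
  have hdiag : ∀ S T, S ≠ T → M S T = 0 := by
    intro S T hST
    obtain ⟨i, hi⟩ : ∃ i, ¬ (i ∈ S ↔ i ∈ T) := by
      by_contra! h
      exact hST (Finset.ext h)
    have h1 : M * (cliffD i * cliffC i) = cliffD i * cliffC i * M := by
      rw [← mul_assoc, hD, mul_assoc, hC, mul_assoc]
    have h2 := congrFun (congrFun h1 S) T
    rw [(mul_cliffD_mul_cliffC_apply i M S T).1, (mul_cliffD_mul_cliffC_apply i M S T).2] at h2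
    by_cases hS : i ∈ S <;> by_cases hT : i ∈ T <;> simp [hS, hT] at h2 hi <;> linarith
  have hconst : ∀ S, M S S = M ∅ ∅ := by
    intro S
    induction S using Finset.induction_on with
    | empty => rfl
    | insert i S hi ih =>
      have h := congrFun (congrFun (hC i) S) (S ∆ {i})
      unfold cliffC at h
      rw [mul_flipMat_apply, flipMat_mul_apply, symmDiff_single_single, mul_comm] at h
      have hne : subsetChar (signC i) S ≠ 0 := by
        intro h0
        have := subsetChar_mul_self (signC i) (signC_mul_self i) S
        rw [h0] at this
        norm_num at this
      have h3 := mul_left_cancel₀ hne h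
      have : S ∆ {i} = insert i S := by
        ext x; by_cases hx : x = i <;> simp [Finset.mem_symmDiff, hx, hi]
      rw [this] at h3
      rw [← h3, ih]
  ext S T
  by_cases h : S = T
  · subst h; simp [hconst S]
  · simp [h, hdiag S T h]

/-! ### Intertwiners -/

/-- The Clifford element `∑ k, g k i • cliffC k` of the `i`-th column of `g`. -/
noncomputable def colC {n : ℕ} (g : Matrix (Fin n) (Fin n) ℝ) (i : Fin n) : SpinMat n :=
  ∑ k, g k i • cliffC k

/-- `a` carries the generators `cliffC i` to their images under `g` and commutes with the
`cliffD i`; a spin lift of `g`, up to scale, when `a` is invertible. -/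
def Intertwines {n : ℕ} (a : SpinMat n) (g : Matrix (Fin n) (Fin n) ℝ) : Prop :=
  (∀ i, a * cliffC i = colC g i * a) ∧ ∀ i, a * cliffD i = cliffD i * a

theorem colC_one {n : ℕ} (i : Fin n) : colC (1 : Matrix (Fin n) (Fin n) ℝ) i = cliffC i := by
  simp [colC, Matrix.one_apply]

theorem Intertwines.one {n : ℕ} : Intertwines (1 : SpinMat n) 1 :=
  ⟨fun i => by rw [colC_one, one_mul, mul_one], fun i => by rw [one_mul, mul_one]⟩

theorem Intertwines.mul {n : ℕ} {a b : SpinMat n} {g h : Matrix (Fin n) (Fin n) ℝ}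
    (ha : Intertwines a g) (hb : Intertwines b h) : Intertwines (a * b) (g * h) := by
  refine ⟨fun i => ?_, fun i => ?_⟩
  · have h1 : a * colC h i = colC (g * h) i * a := by
      unfold colC
      rw [Finset.mul_sum]
      have : ∀ k, a * (h k i • cliffC k) = ∑ l, (g l k * h k i) • (cliffC l * a) := by
        intro k
        rw [Matrix.mul_smul, ha.1 k, colC, Finset.sum_mul, Finset.smul_sum]
        refine Finset.sum_congr rfl fun l _ => ?_
        rw [Matrix.smul_mul, smul_smul, mul_comm]
      simp only [this, Matrix.mul_apply]
      rw [Finset.sum_comm, Finset.sum_mul]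
      refine Finset.sum_congr rfl fun l _ => ?_
      rw [Finset.sum_smul, Finset.sum_mul]
      simp only [Matrix.smul_mul]
    rw [mul_assoc, hb.1, ← mul_assoc, h1, mul_assoc]
  · rw [mul_assoc, hb.2, ← mul_assoc, ha.2, mul_assoc]

theorem Intertwines.eq_scalar {n : ℕ} {a : SpinMat n} (ha : Intertwines a 1) :
    a = a ∅ ∅ • (1 : SpinMat n) :=
  eq_smul_one_of_commute a (fun i => by rw [ha.1, colC_one]) ha.2

/-- Two intertwiners over the same `g` differ by an intertwiner over `1`. -/
theorem Intertwines.inv_mul {n : ℕ} {a b F : SpinMat n} {g : Matrix (Fin n) (Fin n) ℝ}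
    (ha : Intertwines a g) (hF : Intertwines F g) (hab : a * b = 1) (hba : b * a = 1) :
    Intertwines (b * F) 1 := by
  refine ⟨fun i => ?_, fun i => ?_⟩
  · calc b * F * cliffC i = b * (colC g i * (a * b)) * F := by
          rw [hab, mul_one, mul_assoc, hF.1, mul_assoc]
      _ = (b * a) * cliffC i * (b * F) := by
          rw [← mul_assoc (colC g i), ← ha.1]; simp only [mul_assoc]
      _ = colC 1 i * (b * F) := by rw [hba, one_mul, colC_one]
  · calc b * F * cliffD i = b * (cliffD i * (a * b)) * F := by
          rw [hab, mul_one, mul_assoc, hF.2, mul_assoc]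
      _ = (b * a) * cliffD i * (b * F) := by
          rw [← mul_assoc (cliffD i), ← ha.2]; simp only [mul_assoc]
      _ = cliffD i * (b * F) := by rw [hba, one_mul]

theorem colC_anticomm {n : ℕ} (g : Matrix (Fin n) (Fin n) ℝ) (i j : Fin n) :
    colC g i * colC g j + colC g j * colC g i = (2 * (gᵀ * g) i j) • (1 : SpinMat n) := by
  have e1 : colC g i * colC g j = ∑ k, ∑ l, (g k i * g l j) • (cliffC k * cliffC l) := by
    simp only [colC, Finset.sum_mul, Finset.mul_sum, Matrix.smul_mul, Matrix.mul_smul, smul_smul]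
    rw [Finset.sum_comm]
    simp only [mul_comm]
  have e2 : colC g j * colC g i = ∑ k, ∑ l, (g k i * g l j) • (cliffC l * cliffC k) := by
    simp only [colC, Finset.sum_mul, Finset.mul_sum, Matrix.smul_mul, Matrix.mul_smul, smul_smul]
  rw [e1, e2, ← Finset.sum_add_distrib]
  have : ∀ k, (∑ l, (g k i * g l j) • (cliffC k * cliffC l)
      + ∑ l, (g k i * g l j) • (cliffC l * cliffC k)) = (2 * (g k i * g k j)) • (1 : SpinMat n) := by
    intro k
    rw [← Finset.sum_add_distrib, Finset.sum_eq_single k]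
    · rw [cliffC_mul_self, ← add_smul, two_mul]
    · intro l _ hl
      rw [cliffC_mul_cliffC hl, smul_neg, add_neg_cancel]
    · simp
  simp only [this]
  rw [← Finset.sum_smul, ← Finset.mul_sum, Matrix.mul_apply]
  simp [Matrix.transpose_apply]

theorem colC_mul_self {n : ℕ} {g : Matrix (Fin n) (Fin n) ℝ} (hg : gᵀ * g = 1) (i : Fin n) :
    colC g i * colC g i = 1 := by
  have h := colC_anticomm g i i
  rw [hg, Matrix.one_apply_eq, mul_one, ← two_smul ℝ] at h
  exact smul_right_injective _ (two_ne_zero (α := ℝ)) h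

theorem colC_mul_colC {n : ℕ} {g : Matrix (Fin n) (Fin n) ℝ} (hg : gᵀ * g = 1) {i j : Fin n}
    (hij : i ≠ j) : colC g i * colC g j = -(colC g j * colC g i) := by
  have h := colC_anticomm g i j
  rw [hg, Matrix.one_apply_ne hij, mul_zero, zero_smul] at h
  exact eq_neg_of_add_eq_zero_left h

theorem colC_mul_cliffD {n : ℕ} (g : Matrix (Fin n) (Fin n) ℝ) (i j : Fin n) :
    colC g i * cliffD j = -(cliffD j * colC g i) := by
  unfold colC
  rw [Finset.sum_mul, Finset.mul_sum, ← Finset.sum_neg_distrib]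
  refine Finset.sum_congr rfl fun k _ => ?_
  rw [Matrix.smul_mul, Matrix.mul_smul, cliffC_mul_cliffD, smul_neg]

/-- The unnormalised average of `1` over the Clifford generators listed in `l`, which makes it
intertwine these generators with their images under `g`. -/
noncomputable def spinAvg {n : ℕ} (g : Matrix (Fin n) (Fin n) ℝ) : List (Fin n) → SpinMat n
  | [] => 1
  | i :: l => spinAvg g l + colC g i * spinAvg g l * cliffC i

theorem spinAvg_mul_cliffC {n : ℕ} {g : Matrix (Fin n) (Fin n) ℝ} (hg : gᵀ * g = 1)
    (l : List (Fin n)) (hl : l.Nodup) :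
    ∀ i ∈ l, spinAvg g l * cliffC i = colC g i * spinAvg g l := by
  induction l with
  | nil => simp
  | cons j l ih =>
    rw [List.nodup_cons] at hl
    intro i hi
    simp only [spinAvg]
    by_cases hij : i = j
    · subst hij
      rw [add_mul, mul_add, mul_assoc _ (cliffC i) (cliffC i), cliffC_mul_self, mul_one,
        mul_assoc (colC g i), ← mul_assoc (colC g i) (colC g i), colC_mul_self hg, one_mul, add_comm]
    · have hil : i ∈ l := by simpa [hij] using hi
      have h := ih hl.2 i hil
      have e : colC g j * spinAvg g l * cliffC j * cliffC i
          = colC g i * (colC g j * spinAvg g l * cliffC j) := by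
        calc _ = -(colC g j * (spinAvg g l * cliffC i) * cliffC j) := by
              rw [mul_assoc _ (cliffC j), cliffC_mul_cliffC (Ne.symm hij), mul_neg]
              simp only [mul_assoc]
          _ = -(colC g j * colC g i) * (spinAvg g l * cliffC j) := by
              rw [h, neg_mul]; simp only [mul_assoc]
          _ = _ := by rw [← colC_mul_colC hg hij]; simp only [mul_assoc]
      rw [add_mul, mul_add, h, e]

theorem spinAvg_mul_cliffD {n : ℕ} (g : Matrix (Fin n) (Fin n) ℝ)
    (l : List (Fin n)) (i : Fin n) : spinAvg g l * cliffD i = cliffD i * spinAvg g l := by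
  induction l with
  | nil => simp [spinAvg]
  | cons j l ih =>
    simp only [spinAvg]
    have e : colC g j * spinAvg g l * cliffC j * cliffD i
        = cliffD i * (colC g j * spinAvg g l * cliffC j) := by
      calc _ = -(colC g j * (spinAvg g l * cliffD i) * cliffC j) := by
            rw [mul_assoc _ (cliffC j), cliffC_mul_cliffD, mul_neg]
            simp only [mul_assoc]
        _ = -(colC g j * cliffD i) * (spinAvg g l * cliffC j) := by
            rw [ih, neg_mul]; simp only [mul_assoc]
        _ = _ := by rw [colC_mul_cliffD, neg_neg]; simp only [mul_assoc]
    rw [add_mul, mul_add, ih, e]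

theorem intertwines_spinAvg {n : ℕ} {g : Matrix (Fin n) (Fin n) ℝ} (hg : gᵀ * g = 1) :
    Intertwines (spinAvg g (List.finRange n)) g :=
  ⟨fun i => spinAvg_mul_cliffC hg _ (List.nodup_finRange n) i (List.mem_finRange i),
    fun i => spinAvg_mul_cliffD g _ i⟩

theorem spinAvg_one {n : ℕ} (l : List (Fin n)) :
    spinAvg (1 : Matrix (Fin n) (Fin n) ℝ) l = (2 : ℝ) ^ l.length • (1 : SpinMat n) := by
  induction l with
  | nil => simp [spinAvg]
  | cons j l ih =>
    simp only [spinAvg, ih, colC_one, Matrix.mul_smul, Matrix.smul_mul, mul_one, cliffC_mul_self,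
      List.length_cons]
    rw [← add_smul, pow_succ, mul_two]

theorem continuous_spinAvg {n : ℕ} (l : List (Fin n)) :
    Continuous fun g : Matrix (Fin n) (Fin n) ℝ => spinAvg g l := by
  induction l with
  | nil => exact continuous_const
  | cons j l ih =>
    have hc : Continuous fun g : Matrix (Fin n) (Fin n) ℝ => colC g j := by
      unfold colC
      refine continuous_finsetSum _ fun k _ => ?_
      exact (continuous_id.matrix_elem k j).smul continuous_const
    exact ih.add ((hc.matrix_mul ih).matrix_mul continuous_const)

/-! ### Lifting homotopies -/

/-- A homotopy of maps from a compact space to the orthogonal group has a continuous invertible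
intertwiner over the quotient of its two ends. -/
theorem exists_continuous_lift {n : ℕ} {X : Type*} [PseudoMetricSpace X] [CompactSpace X]
    (G : X × unitInterval → Matrix (Fin n) (Fin n) ℝ) (hG : Continuous G)
    (hO : ∀ y, (G y)ᵀ * G y = 1) :
    ∃ F : X → SpinMat n, Continuous F ∧
      ∀ x, (F x).det ≠ 0 ∧ Intertwines (F x) (G (x, 1) * (G (x, 0))ᵀ) := by
  have hO' : ∀ y, G y * (G y)ᵀ = 1 := fun y => mul_eq_one_comm.mp (hO y)
  let s : X × unitInterval × unitInterval → SpinMat n := fun y =>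
    spinAvg (G (y.1, y.2.1) * (G (y.1, y.2.2))ᵀ) (List.finRange n)
  have hs : Continuous s := by
    refine (continuous_spinAvg _).comp ?_
    exact (hG.comp (by fun_prop)).matrix_mul (hG.comp (by fun_prop)).matrix_transpose
  have hInt : ∀ y, Intertwines (s y) (G (y.1, y.2.1) * (G (y.1, y.2.2))ᵀ) := by
    intro y
    refine intertwines_spinAvg ?_
    rw [Matrix.transpose_mul, Matrix.transpose_transpose, mul_assoc, ← mul_assoc _ (G (y.1, y.2.1)),
      hO, one_mul, hO']
  have hdet : Continuous fun y => (s y).det := hs.matrix_det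
  have hunif := CompactSpace.uniformContinuous_of_continuous hdet
  have hdiag : ∀ x r, (s (x, r, r)).det = ((2 : ℝ) ^ n) ^ (Fintype.card (Finset (Fin n))) := by
    intro x r
    simp only [s, hO', spinAvg_one, List.length_finRange, Matrix.det_smul, Matrix.det_one, mul_one]
  obtain ⟨δ, hδ, hclose⟩ := Metric.uniformContinuous_iff.mp hunif
    (((2 : ℝ) ^ n) ^ (Fintype.card (Finset (Fin n)))) (by positivity)
  have hne : ∀ x (r r' : unitInterval), dist r r' < δ → (s (x, r, r')).det ≠ 0 := by
    intro x r r' h h0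
    have h1 : dist (x, r, r') (x, r', r') < δ := by
      simp [Prod.dist_eq, h]
    have h2 := hclose h1
    simp only [h0, hdiag, dist_zero_left] at h2
    rw [Real.norm_of_nonneg (by positivity)] at h2
    exact lt_irrefl _ h2
  obtain ⟨k, hk⟩ := exists_nat_one_div_lt hδ
  -- the subdivision points `j / (k + 1)`, clamped to the unit interval
  let q : ℕ → unitInterval := fun j => Set.projIcc (0 : ℝ) 1 zero_le_one (j / (k + 1 : ℝ))
  have hq : ∀ j, dist (q (j + 1)) (q j) < δ := by
    intro j
    have h1 := (LipschitzWith.projIcc (zero_le_one (α := ℝ))).dist_le_mul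
      (((j + 1 : ℕ) : ℝ) / (k + 1 : ℝ)) (j / (k + 1 : ℝ))
    refine lt_of_le_of_lt h1 ?_
    rw [Real.dist_eq, NNReal.coe_one, one_mul]
    have : ((j + 1 : ℕ) : ℝ) / (k + 1 : ℝ) - j / (k + 1 : ℝ) = 1 / (k + 1) := by
      push_cast; ring
    rw [this, abs_of_pos (by positivity)]
    exact hk
  have hq0 : q 0 = 0 := by
    simp only [q, Nat.cast_zero, zero_div]
    exact Set.projIcc_left _
  have hq1 : q (k + 1) = 1 := by
    simp only [q]
    push_cast
    rw [div_self (by positivity)]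
    exact Set.projIcc_right _
  have main : ∀ j : ℕ, ∃ F : X → SpinMat n, Continuous F ∧
      ∀ x, (F x).det ≠ 0 ∧ Intertwines (F x) (G (x, q j) * (G (x, 0))ᵀ) := by
    intro j
    induction j with
    | zero =>
      refine ⟨fun _ => 1, continuous_const, fun x => ⟨by simp, ?_⟩⟩
      rw [hq0, hO']
      exact Intertwines.one
    | succ j ih =>
      obtain ⟨F, hF, hF'⟩ := ih
      refine ⟨fun x => s (x, q (j + 1), q j) * F x, ?_, fun x => ⟨?_, ?_⟩⟩
      · exact (hs.comp (by fun_prop)).matrix_mul hF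
      · rw [Matrix.det_mul]
        exact mul_ne_zero (hne x _ _ (hq j)) (hF' x).1
      · have h := (hInt (x, q (j + 1), q j)).mul (hF' x).2
        have e : G (x, q (j + 1)) * (G (x, q j))ᵀ * (G (x, q j) * (G (x, 0))ᵀ)
            = G (x, q (j + 1)) * (G (x, 0))ᵀ := by
          rw [mul_assoc, ← mul_assoc _ (G (x, q j)), hO, one_mul]
        rwa [e] at h
  obtain ⟨F, hF⟩ := main (k + 1)
  rw [hq1] at hF
  exact ⟨F, hF⟩

theorem mul_pos_of_continuous_ne_zero (f : unitInterval → ℝ) (hf : Continuous f)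
    (h : ∀ t, f t ≠ 0) : 0 < f 0 * f 1 := by
  by_contra hcon
  have h0 : (0 : ℝ) ∈ Set.range f := by
    rcases lt_or_gt_of_ne (h 0) with h0 | h0 <;> rcases lt_or_gt_of_ne (h 1) with h1 | h1
    · exact absurd (mul_pos_of_neg_of_neg h0 h1) hcon
    · exact mem_range_of_exists_le_of_exists_ge hf ⟨0, h0.le⟩ ⟨1, h1.le⟩
    · exact mem_range_of_exists_le_of_exists_ge hf ⟨1, h1.le⟩ ⟨0, h0.le⟩
    · exact absurd (mul_pos h0 h1) hcon
  obtain ⟨t, ht⟩ := h0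
  exact h t ht

theorem Intertwines.apply_ne_zero {n : ℕ} {a : SpinMat n} (ha : Intertwines a 1)
    (hdet : a.det ≠ 0) : a ∅ ∅ ≠ 0 := by
  intro h0
  apply hdet
  rw [ha.eq_scalar, h0, zero_smul, Matrix.det_zero]

/-! ### The explicit loop and its spin lift -/

theorem soLoop_castAdd_castAdd (m : ℕ) (θ : ℝ) (i j : Fin 2) :
    soLoop (2 + m) θ (Fin.castAdd m i) (Fin.castAdd m j)
      = !![Real.sin θ, Real.cos θ; -Real.cos θ, Real.sin θ] i j := by
  fin_cases i <;> fin_cases j <;> simp [soLoop, -Fin.val_eq_zero_iff]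

theorem soLoop_castAdd_natAdd (m : ℕ) (θ : ℝ) (i : Fin 2) (j : Fin m) :
    soLoop (2 + m) θ (Fin.castAdd m i) (Fin.natAdd 2 j) = 0 := by
  have h0 : 2 + (j : ℕ) ≠ 0 := by omega
  have h1 : 2 + (j : ℕ) ≠ 1 := by omega
  have h2 : (i : ℕ) ≠ 2 + (j : ℕ) := by omega
  simp only [soLoop, Matrix.of_apply, Fin.val_castAdd, Fin.val_natAdd, h0, h1, h2, and_false,
    if_false]

theorem soLoop_natAdd_castAdd (m : ℕ) (θ : ℝ) (i : Fin m) (j : Fin 2) :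
    soLoop (2 + m) θ (Fin.natAdd 2 i) (Fin.castAdd m j) = 0 := by
  have h0 : 2 + (i : ℕ) ≠ 0 := by omega
  have h1 : 2 + (i : ℕ) ≠ 1 := by omega
  have h2 : 2 + (i : ℕ) ≠ (j : ℕ) := by omega
  simp only [soLoop, Matrix.of_apply, Fin.val_castAdd, Fin.val_natAdd, h0, h1, h2, false_and,
    if_false]

theorem soLoop_natAdd_natAdd (m : ℕ) (θ : ℝ) (i j : Fin m) :
    soLoop (2 + m) θ (Fin.natAdd 2 i) (Fin.natAdd 2 j) = if i = j then 1 else 0 := by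
  have h0 : 2 + (i : ℕ) ≠ 0 := by omega
  have h1 : 2 + (i : ℕ) ≠ 1 := by omega
  simp only [soLoop, Matrix.of_apply, Fin.val_natAdd, h0, h1, false_and, if_false,
    add_right_inj, Fin.ext_iff]

theorem soLoop_submatrix (m : ℕ) (θ : ℝ) :
    (soLoop (2 + m) θ).submatrix finSumFinEquiv finSumFinEquiv
      = Matrix.fromBlocks !![Real.sin θ, Real.cos θ; -Real.cos θ, Real.sin θ] 0 0 1 := by
  ext i j
  rcases i with i | i <;> rcases j with j | j
  · exact soLoop_castAdd_castAdd m θ i j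
  · exact soLoop_castAdd_natAdd m θ i j
  · exact soLoop_natAdd_castAdd m θ i j
  · exact (soLoop_natAdd_natAdd m θ i j).trans (Matrix.one_apply).symm

theorem soLoop_det (m : ℕ) (θ : ℝ) : (soLoop (2 + m) θ).det = 1 := by
  rw [← Matrix.det_submatrix_equiv_self finSumFinEquiv, soLoop_submatrix,
    Matrix.det_fromBlocks_zero₂₁, Matrix.det_fin_two_of, Matrix.det_one]
  linear_combination Real.sin_sq_add_cos_sq θ

theorem soLoop_orthogonal (m : ℕ) (θ : ℝ) : (soLoop (2 + m) θ)ᵀ * soLoop (2 + m) θ = 1 := by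
  have h : ((soLoop (2 + m) θ)ᵀ * soLoop (2 + m) θ).submatrix
      (finSumFinEquiv (m := 2) (n := m)) finSumFinEquiv = 1 := by
    rw [← Matrix.submatrix_mul_equiv _ _ _ finSumFinEquiv _, ← Matrix.transpose_submatrix,
      soLoop_submatrix, Matrix.fromBlocks_transpose, Matrix.fromBlocks_multiply,
      ← Matrix.fromBlocks_one]
    have hsc := Real.sin_sq_add_cos_sq θ
    congr 1
    · ext i j
      fin_cases i <;> fin_cases j <;> simp [Matrix.mul_apply, Fin.sum_univ_two] <;>
        linarith
    · simp
    · simp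
    · simp
  have h2 := congrArg (fun M => M.submatrix finSumFinEquiv.symm finSumFinEquiv.symm) h
  simpa using h2

/-- The product of the first two Clifford generators. -/
noncomputable def bivec (m : ℕ) : SpinMat (2 + m) :=
  cliffC (Fin.castAdd m 0) * cliffC (Fin.castAdd m 1)

/-- The rotor of angle `φ` in the first coordinate plane. -/
noncomputable def rotor (m : ℕ) (φ : ℝ) : SpinMat (2 + m) :=
  Real.cos φ • (1 : SpinMat (2 + m)) - Real.sin φ • bivec m

theorem castAdd_zero_ne_one (m : ℕ) : (Fin.castAdd m 0 : Fin (2 + m)) ≠ Fin.castAdd m 1 := by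
  simp [Fin.ext_iff]

theorem bivec_mul_self (m : ℕ) : bivec m * bivec m = -1 := by
  unfold bivec
  rw [mul_assoc, ← mul_assoc (cliffC (Fin.castAdd m 1)),
    cliffC_mul_cliffC (castAdd_zero_ne_one m).symm, neg_mul, mul_neg, mul_assoc,
    cliffC_mul_self, mul_one, cliffC_mul_self]

theorem rotor_mul_rotor_neg (m : ℕ) (φ : ℝ) : rotor m φ * rotor m (-φ) = 1 := by
  unfold rotor
  rw [Real.cos_neg, Real.sin_neg]
  simp only [sub_mul, mul_sub, Matrix.smul_mul, Matrix.mul_smul, one_mul, mul_one, bivec_mul_self]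
  have := Real.sin_sq_add_cos_sq φ
  have h1 : (1 : SpinMat (2 + m))
    = (Real.sin φ ^ 2 + Real.cos φ ^ 2) • (1 : SpinMat (2 + m)) := by rw [this, one_smul]
  conv_rhs => rw [h1]
  module

theorem colC_soLoop_zero (m : ℕ) (θ : ℝ) : colC (soLoop (2 + m) θ) (Fin.castAdd m 0)
    = Real.sin θ • cliffC (Fin.castAdd m 0) - Real.cos θ • cliffC (Fin.castAdd m 1) := by
  unfold colC
  rw [Fin.sum_univ_add, Fin.sum_univ_two]
  simp [soLoop_castAdd_castAdd, soLoop_natAdd_castAdd, sub_eq_add_neg]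

theorem colC_soLoop_one (m : ℕ) (θ : ℝ) : colC (soLoop (2 + m) θ) (Fin.castAdd m 1)
    = Real.cos θ • cliffC (Fin.castAdd m 0) + Real.sin θ • cliffC (Fin.castAdd m 1) := by
  unfold colC
  rw [Fin.sum_univ_add, Fin.sum_univ_two]
  simp [soLoop_castAdd_castAdd, soLoop_natAdd_castAdd]

theorem colC_soLoop_natAdd (m : ℕ) (θ : ℝ) (i : Fin m) :
    colC (soLoop (2 + m) θ) (Fin.natAdd 2 i) = cliffC (Fin.natAdd 2 i) := by
  unfold colC
  rw [Fin.sum_univ_add, Fin.sum_univ_two]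
  simp [soLoop_castAdd_natAdd, soLoop_natAdd_natAdd]

/-- `soLoop n θ` is the rotation by `θ - π / 2` in the first coordinate plane, whence the half
angle `θ / 2 - π / 4`. -/
theorem intertwines_rotor (m : ℕ) (θ : ℝ) :
    Intertwines (rotor m (θ / 2 - π / 4)) (soLoop (2 + m) θ) := by
  set φ := θ / 2 - π / 4 with hφ
  have hθ : θ = 2 * φ + π / 2 := by rw [hφ]; ring
  have hsin : Real.sin θ = Real.cos φ ^ 2 - Real.sin φ ^ 2 := by
    rw [hθ, Real.sin_add_pi_div_two, Real.cos_two_mul']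
  have hcos : Real.cos θ = -(2 * Real.sin φ * Real.cos φ) := by
    rw [hθ, Real.cos_add_pi_div_two, Real.sin_two_mul]
  have hsc := Real.sin_sq_add_cos_sq φ
  have h00 := cliffC_mul_self (Fin.castAdd m (0 : Fin 2))
  have h11 := cliffC_mul_self (Fin.castAdd m (1 : Fin 2))
  have h10 := cliffC_mul_cliffC (castAdd_zero_ne_one m).symm
  have hB0 : bivec m * cliffC (Fin.castAdd m 0) = -cliffC (Fin.castAdd m 1) := by
    unfold bivec; rw [mul_assoc, h10, mul_neg, ← mul_assoc, h00, one_mul]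
  have h0B : cliffC (Fin.castAdd m 0) * bivec m = cliffC (Fin.castAdd m 1) := by
    unfold bivec; rw [← mul_assoc, h00, one_mul]
  have hB1 : bivec m * cliffC (Fin.castAdd m 1) = cliffC (Fin.castAdd m 0) := by
    unfold bivec; rw [mul_assoc, h11, mul_one]
  have h1B : cliffC (Fin.castAdd m 1) * bivec m = -cliffC (Fin.castAdd m 0) := by
    unfold bivec; rw [← mul_assoc, h10, neg_mul, mul_assoc, h11, mul_one]
  refine ⟨fun i => ?_, fun i => ?_⟩
  · refine Fin.addCases (fun i => ?_) (fun i => ?_) i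
    · fin_cases i
      · change _ * cliffC (Fin.castAdd m 0) = colC _ (Fin.castAdd m 0) * _
        rw [colC_soLoop_zero, hsin, hcos]
        simp only [rotor, sub_mul, mul_sub, Matrix.smul_mul, Matrix.mul_smul, one_mul, mul_one,
          hB0, h0B, h1B]
        match_scalars
        · linear_combination (-Real.cos φ) * hsc
        · linear_combination (-Real.sin φ) * hsc
      · change _ * cliffC (Fin.castAdd m 1) = colC _ (Fin.castAdd m 1) * _
        rw [colC_soLoop_one, hsin, hcos]
        simp only [rotor, sub_mul, mul_sub, add_mul, Matrix.smul_mul, Matrix.mul_smul, one_mul,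
          mul_one, hB1, h0B, h1B]
        match_scalars
        · linear_combination (-Real.cos φ) * hsc
        · linear_combination (Real.sin φ) * hsc
    · rw [colC_soLoop_natAdd]
      have n0 : (Fin.castAdd m 0 : Fin (2 + m)) ≠ Fin.natAdd 2 i := by
        simp [Fin.ext_iff]; omega
      have n1 : (Fin.castAdd m 1 : Fin (2 + m)) ≠ Fin.natAdd 2 i := by
        simp [Fin.ext_iff]; omega
      have hB : bivec m * cliffC (Fin.natAdd 2 i) = cliffC (Fin.natAdd 2 i) * bivec m := by
        unfold bivec
        rw [mul_assoc, cliffC_mul_cliffC n1, mul_neg, ← mul_assoc, cliffC_mul_cliffC n0, neg_mul,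
          neg_neg, mul_assoc]
      simp only [rotor, sub_mul, mul_sub, Matrix.smul_mul, Matrix.mul_smul, one_mul, mul_one, hB]
  · have hB : bivec m * cliffD i = cliffD i * bivec m := by
      unfold bivec
      rw [mul_assoc, cliffC_mul_cliffD, mul_neg, ← mul_assoc, cliffC_mul_cliffD, neg_mul,
        neg_neg, mul_assoc]
    simp only [rotor, sub_mul, mul_sub, Matrix.smul_mul, Matrix.mul_smul, one_mul, mul_one, hB]

theorem rotor_sub_pi (m : ℕ) (φ : ℝ) : rotor m (φ - π) = -rotor m φ := by
  unfold rotor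
  rw [Real.cos_sub_pi, Real.sin_sub_pi]
  module

theorem continuous_rotor (m : ℕ) : Continuous (rotor m) := by
  unfold rotor
  exact (Real.continuous_cos.smul continuous_const).sub
    (Real.continuous_sin.smul continuous_const)

/-- each `γ(θ)` lies in `SO(n)`, `γ(0) = γ(2π)`, and the loop
`θ ↦ γ(θ)`, `θ ∈ [0, 2π]`, based at `γ(0)` in the topological space `SO(n)`, is not
path-homotopic (rel endpoints) to the constant loop at `γ(0)`. -/
theorem stmt_2 (n : ℕ) (hn : 2 ≤ n) :
    (∀ θ : ℝ, (soLoop n θ)ᵀ * soLoop n θ = 1 ∧ (soLoop n θ).det = 1) ∧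
    soLoop n 0 = soLoop n (2 * Real.pi) ∧
    (∀ x : {A : Matrix (Fin n) (Fin n) ℝ // Aᵀ * A = 1 ∧ A.det = 1},
      (x : Matrix (Fin n) (Fin n) ℝ) = soLoop n 0 →
      ∀ p : Path x x,
        (∀ t : unitInterval, ((p t : {A : Matrix (Fin n) (Fin n) ℝ // Aᵀ * A = 1 ∧ A.det = 1}) :
            Matrix (Fin n) (Fin n) ℝ) = soLoop n (2 * Real.pi * (t : ℝ))) →
        ¬ Path.Homotopic p (Path.refl x)) := by
  obtain ⟨m, rfl⟩ := Nat.exists_eq_add_of_le hn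
  refine ⟨fun θ => ⟨soLoop_orthogonal m θ, soLoop_det m θ⟩, ?_, ?_⟩
  · simp only [soLoop, Real.sin_zero, Real.cos_zero, Real.sin_two_pi, Real.cos_two_pi]
  rintro x hx p hp ⟨H⟩
  have hxO : (x : Matrix (Fin (2 + m)) (Fin (2 + m)) ℝ) * (x.1)ᵀ = 1 :=
    mul_eq_one_comm.mp x.2.1
  -- contract the square radially to its corner `(0, 0)`
  obtain ⟨F, hF, hFx⟩ := exists_continuous_lift (X := unitInterval × unitInterval)
    (fun y => (H (y.2 * y.1.1, y.2 * y.1.2)).1)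
    (continuous_subtype_val.comp (H.continuous.comp (by fun_prop)))
    (fun y => (H _).2.1)
  have hdet : ∀ y, (F y).det ≠ 0 := fun y => (hFx y).1
  have hInt : ∀ y : unitInterval × unitInterval, Intertwines (F y) ((H y).1 * (x.1)ᵀ) := by
    intro y
    have h := (hFx y).2
    simp only [one_mul, zero_mul] at h
    rwa [show H (0, 0) = x from (H.apply_zero 0).trans p.source] at h
  have hone : ∀ y, H y = x → Intertwines (F y) 1 := by
    intro y hy
    have h := hInt y
    rwa [hy, hxO] at h
  have hs0 : ∀ s, Intertwines (F (s, 0)) 1 := fun s => hone _ (H.source s)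
  have hs1 : ∀ s, Intertwines (F (s, 1)) 1 := fun s => hone _ (H.target s)
  have h1t : ∀ t, Intertwines (F (1, t)) 1 := fun t => hone _ (H.apply_one t)
  have P1 := mul_pos_of_continuous_ne_zero (fun s => F (s, 0) ∅ ∅)
    ((hF.comp (by fun_prop)).matrix_elem _ _) (fun s => (hs0 s).apply_ne_zero (hdet _))
  have P2 := mul_pos_of_continuous_ne_zero (fun t => F (1, t) ∅ ∅)
    ((hF.comp (by fun_prop)).matrix_elem _ _) (fun t => (h1t t).apply_ne_zero (hdet _))
  have P3 := mul_pos_of_continuous_ne_zero (fun s => F (s, 1) ∅ ∅)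
    ((hF.comp (by fun_prop)).matrix_elem _ _) (fun s => (hs1 s).apply_ne_zero (hdet _))
  -- on the side `s = 0`, compare `F` with the explicit rotor
  let a : unitInterval → SpinMat (2 + m) := fun t => rotor m (2 * π * (t : ℝ) / 2 - π / 4)
  let b : unitInterval → SpinMat (2 + m) := fun t => rotor m (-(2 * π * (t : ℝ) / 2 - π / 4))
  have hab : ∀ t, a t * b t = 1 := fun t => rotor_mul_rotor_neg m _
  have hba : ∀ t, b t * a t = 1 := fun t => mul_eq_one_comm.mp (hab t)
  have ha : ∀ t, Intertwines (a t) (p t).1 := fun t => by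
    rw [hp t]; exact intertwines_rotor m _
  have hFa : ∀ t, Intertwines (F (0, t) * a 0) (p t).1 := by
    intro t
    have h := (hInt (0, t)).mul (ha 0)
    rwa [H.apply_zero, p.source, mul_assoc, x.2.1, mul_one] at h
  have hμ : ∀ t, Intertwines (b t * (F (0, t) * a 0)) 1 :=
    fun t => (ha t).inv_mul (hFa t) (hab t) (hba t)
  have hμdet : ∀ t, (b t * (F (0, t) * a 0)).det ≠ 0 := by
    intro t
    have hb : (b t).det ≠ 0 := fun h => by
      have := congrArg Matrix.det (hab t); simp [h] at this
    have ha0 : (a 0).det ≠ 0 := fun h => by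
      have := congrArg Matrix.det (hab 0); simp [h] at this
    rw [Matrix.det_mul, Matrix.det_mul]
    exact mul_ne_zero hb (mul_ne_zero (hdet _) ha0)
  have hbc : Continuous b := (continuous_rotor m).comp (by fun_prop)
  have P4 := mul_pos_of_continuous_ne_zero (fun t => (b t * (F (0, t) * a 0)) ∅ ∅)
    ((hbc.matrix_mul ((hF.comp (by fun_prop)).matrix_mul continuous_const)).matrix_elem _ _)
    (fun t => (hμ t).apply_ne_zero (hμdet t))
  have hb1 : b 1 = -b 0 := by
    simp only [b]
    rw [← rotor_sub_pi]
    congr 1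
    simp only [Set.Icc.coe_one, Set.Icc.coe_zero]
    ring
  have e0 : (b 0 * (F (0, 0) * a 0)) = F (0, 0) := by
    rw [(hs0 0).eq_scalar, Matrix.smul_mul, one_mul, Matrix.mul_smul, hba]
  have e1 : (b 1 * (F (0, 1) * a 0)) = -F (0, 1) := by
    rw [(hs1 0).eq_scalar, Matrix.smul_mul, one_mul, Matrix.mul_smul, hb1, neg_mul, hba, smul_neg]
  simp only [e0, e1, Matrix.neg_apply] at P4
  -- the corner values satisfy `F₀₀F₁₀ > 0`, `F₁₀F₁₁ > 0`, `F₀₁F₁₁ > 0` and `-F₀₀F₀₁ > 0`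
  have hprod := mul_pos (mul_pos P1 P2) (mul_pos P3 P4)
  nlinarith [sq_nonneg (F (0, 0) ∅ ∅ * F (1, 0) ∅ ∅ * F (1, 1) ∅ ∅ * F (0, 1) ∅ ∅)]
end

section
/- Fix an integer n ≥ 1, let q(z) = z₀² + ⋯ + z_n² − z_{n+1}² on ℂ^{n+2}, and let X = {[z] ∈ ℙ^{n+1}(ℂ) : q(z) = 0}. Suppose x ∈ X, ℓ ⊆ X is a projective line with x ∉ ℓ, and the projective plane P spanned by x and ℓ (i.e., the projective subspace associated to span(W ∪ {x̂}) where ℓ is the projective line of the 2-dimensional subspace W and x̂ is a nonzero representative of x) is not contained in X. Then there exists a unique projective line ℓ′ ⊆ ℙ^{n+1}(ℂ) such that ℓ′ ⊆ X, x ∈ ℓ′, and ℓ′ ∩ ℓ ≠ ∅. -/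
/-!
Write `q` for the quadratic form cutting out `X` and `B` for its polar form (up to the factor `2`),
so that `q (a • x + w) = a² q x + q w + 2 a B x w` (`quadForm_smul_add`). With `q x = 0` and `q = 0`
on `W`, the form `q` on the plane spanned by `x` and `W` is `2 a B x w`. Hence the plane lies in the
quadric exactly when the functional `B x` vanishes on `W`, and the line joining `x` to a point
`y` of `ℓ` lies in the quadric exactly when `B x y = 0`. As the plane is not contained in `X`, the
functional `B x` is nonzero on the 2-dimensional space `W`, so its kernel there is a line `ℂ y₀`:
the only line sought is the one joining `x` to `[y₀]`.
-/

open Projectivization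

/-- The projective subspace of `ℙ^{m-1}(ℂ)` associated to a linear subspace
`W ⊆ ℂ^m`: the image of `W ∖ {0}` under the quotient map. -/
def projSub {m : ℕ} (W : Submodule ℂ (Fin m → ℂ)) : Set (Projectivization ℂ (Fin m → ℂ)) :=
  {p | ∃ z, ∃ hz : z ≠ 0, z ∈ W ∧ Projectivization.mk ℂ z hz = p}

/-- `S` is a projective line in `ℙ^{m-1}(ℂ)`. -/
def IsProjLine {m : ℕ} (S : Set (Projectivization ℂ (Fin m → ℂ))) : Prop :=
  ∃ W : Submodule ℂ (Fin m → ℂ), Module.finrank ℂ W = 2 ∧ S = projSub W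

/-- The `n`-dimensional quadric hypersurface `{z₀² + ⋯ + z_n² − z_{n+1}² = 0} ⊆ ℙ^{n+1}(ℂ)`. -/
def quadricX (n : ℕ) : Set (Projectivization ℂ (Fin (n + 2) → ℂ)) :=
  {p | ∀ z, ∀ hz : z ≠ 0, Projectivization.mk ℂ z hz = p →
    (∑ i : Fin (n + 1), z i.castSucc ^ 2) - z (Fin.last (n + 1)) ^ 2 = 0}

/-- The quadratic form `z₀² + ⋯ + z_n² − z_{n+1}²` defining the quadric. -/
def quadForm {n : ℕ} (z : Fin (n + 2) → ℂ) : ℂ :=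
  (∑ i : Fin (n + 1), z i.castSucc ^ 2) - z (Fin.last (n + 1)) ^ 2

/-- The functional `w ↦ B x w`, where `B` is the symmetric bilinear form with
`B z z = quadForm z`. -/
noncomputable def polarForm {n : ℕ} (x : Fin (n + 2) → ℂ) : (Fin (n + 2) → ℂ) →ₗ[ℂ] ℂ :=
  (∑ i : Fin (n + 1), x i.castSucc • LinearMap.proj i.castSucc)
    - x (Fin.last (n + 1)) • LinearMap.proj (Fin.last (n + 1))

lemma quadForm_smul_add {n : ℕ} (a : ℂ) (x w : Fin (n + 2) → ℂ) :
    quadForm (a • x + w) = a ^ 2 * quadForm x + quadForm w + 2 * a * polarForm x w := by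
  have h : ∑ i : Fin (n + 1), (a * x i.castSucc + w i.castSucc) ^ 2
      = a ^ 2 * ∑ i : Fin (n + 1), x i.castSucc ^ 2 + ∑ i : Fin (n + 1), w i.castSucc ^ 2
        + 2 * a * ∑ i : Fin (n + 1), x i.castSucc * w i.castSucc := by
    simp only [Finset.mul_sum, ← Finset.sum_add_distrib]
    exact Finset.sum_congr rfl fun i _ => by ring
  simp only [quadForm, polarForm, Pi.add_apply, Pi.smul_apply, smul_eq_mul, LinearMap.sub_apply,
    LinearMap.sum_apply, LinearMap.smul_apply, LinearMap.proj_apply, h]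
  ring

lemma quadForm_smul {n : ℕ} (a : ℂ) (x : Fin (n + 2) → ℂ) :
    quadForm (a • x) = a ^ 2 * quadForm x := by
  have h := quadForm_smul_add a x 0
  have h0 : quadForm (0 : Fin (n + 2) → ℂ) = 0 := by simp [quadForm]
  simpa [h0] using h

lemma mk_mem_quadricX {n : ℕ} {z : Fin (n + 2) → ℂ} (hz : z ≠ 0) :
    Projectivization.mk ℂ z hz ∈ quadricX n ↔ quadForm z = 0 := by
  refine ⟨fun h => h z hz rfl, fun h w hw hwz => ?_⟩
  obtain ⟨a, rfl⟩ := (Projectivization.mk_eq_mk_iff' ℂ w z hw hz).1 hwz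
  change quadForm (a • z) = 0
  rw [quadForm_smul, h, mul_zero]

lemma mk_mem_projSub {m : ℕ} {z : Fin m → ℂ} (hz : z ≠ 0) (V : Submodule ℂ (Fin m → ℂ)) :
    Projectivization.mk ℂ z hz ∈ projSub V ↔ z ∈ V := by
  refine ⟨?_, fun h => ⟨z, hz, h, rfl⟩⟩
  rintro ⟨w, hw, hwV, hwz⟩
  obtain ⟨a, rfl⟩ := (Projectivization.mk_eq_mk_iff' ℂ z w hz hw).1 hwz.symm
  exact V.smul_mem a hwV

lemma projSub_subset_quadricX {n : ℕ} (V : Submodule ℂ (Fin (n + 2) → ℂ)) :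
    projSub V ⊆ quadricX n ↔ ∀ z ∈ V, quadForm z = 0 := by
  constructor
  · intro h z hz
    by_cases hz0 : z = 0
    · simp [hz0, quadForm]
    · exact (mk_mem_quadricX hz0).1 (h ((mk_mem_projSub hz0 V).2 hz))
  · rintro h _ ⟨z, hz0, hz, rfl⟩
    exact (mk_mem_quadricX hz0).2 (h z hz)

/-- A functional that does not vanish on a 2-dimensional subspace has a 1-dimensional kernel
there. -/
lemma exists_generator_ker {V : Type*} [AddCommGroup V] [Module ℂ V]
    (W : Submodule ℂ V) (hW : Module.finrank ℂ W = 2) (f : V →ₗ[ℂ] ℂ)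
    (hf : ∃ w ∈ W, f w ≠ 0) :
    ∃ y ∈ W, y ≠ 0 ∧ f y = 0 ∧ ∀ w ∈ W, f w = 0 → ∃ c : ℂ, c • y = w := by
  obtain ⟨w, hw, hfw⟩ := hf
  have hne : f.domRestrict W ≠ 0 := fun h => hfw (by simpa using LinearMap.congr_fun h ⟨w, hw⟩)
  have : FiniteDimensional ℂ W := FiniteDimensional.of_finrank_pos (by omega)
  have hker : Module.finrank ℂ (LinearMap.ker (f.domRestrict W)) = 1 := by
    have h1 := LinearMap.finrank_range_add_finrank_ker (f.domRestrict W)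
    rw [LinearMap.range_eq_top.2 (LinearMap.surjective hne), finrank_top,
      Module.finrank_self, hW] at h1
    omega
  obtain ⟨⟨⟨y, hyW⟩, hy⟩, hy0, hgen⟩ := finrank_eq_one_iff'.1 hker
  refine ⟨y, hyW, fun h => hy0 (by ext1; ext1; exact h), by simpa using hy, fun v hv hfv => ?_⟩
  obtain ⟨c, hc⟩ := hgen ⟨⟨v, hv⟩, by simpa using hfv⟩
  exact ⟨c, congrArg (fun t : LinearMap.ker (f.domRestrict W) => ((t : W) : V)) hc⟩

/-- let `x` be a point of the quadric `X`, `ℓ ⊆ X` a projective line not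
containing `x`, and suppose the projective plane spanned by `x` and `ℓ` is not contained
in `X`.  Then there is a unique projective line `ℓ′` with `ℓ′ ⊆ X`, `x ∈ ℓ′`, and
`ℓ′ ∩ ℓ ≠ ∅`. -/
theorem stmt_8 (n : ℕ) (hn : 1 ≤ n)
    (x : Projectivization ℂ (Fin (n + 2) → ℂ)) (hx : x ∈ quadricX n)
    (W : Submodule ℂ (Fin (n + 2) → ℂ)) (hW : Module.finrank ℂ W = 2)
    (ℓ : Set (Projectivization ℂ (Fin (n + 2) → ℂ))) (hℓW : ℓ = projSub W)
    (hℓX : ℓ ⊆ quadricX n) (hxℓ : x ∉ ℓ)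
    (xhat : Fin (n + 2) → ℂ) (hxhat : xhat ≠ 0)
    (hxrep : Projectivization.mk ℂ xhat hxhat = x)
    (hP : ¬ projSub (W ⊔ Submodule.span ℂ {xhat}) ⊆ quadricX n) :
    ∃! ℓ' : Set (Projectivization ℂ (Fin (n + 2) → ℂ)),
      IsProjLine ℓ' ∧ ℓ' ⊆ quadricX n ∧ x ∈ ℓ' ∧ (ℓ' ∩ ℓ).Nonempty := by
  subst hxrep hℓW
  rw [mk_mem_quadricX] at hx
  rw [mk_mem_projSub] at hxℓ
  rw [projSub_subset_quadricX] at hP hℓX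
  have hB : ∃ w ∈ W, polarForm xhat w ≠ 0 := by
    by_contra! h
    refine hP fun z hz => ?_
    obtain ⟨w, hw, v, hv, rfl⟩ := Submodule.mem_sup.1 hz
    obtain ⟨a, rfl⟩ := Submodule.mem_span_singleton.1 hv
    rw [add_comm, quadForm_smul_add, hx, hℓX w hw, h w hw]
    ring
  obtain ⟨y, hyW, hy0, hy, hgen⟩ := exists_generator_ker W hW _ hB
  have hrank : Module.finrank ℂ (Submodule.span ℂ {xhat, y}) = 2 := by
    have hli : LinearIndependent ℂ ![xhat, y] := by
      rw [LinearIndependent.pair_iff' hxhat]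
      rintro a rfl
      have ha : a ≠ 0 := by rintro rfl; simp at hy0
      exact hxℓ ((W.smul_mem_iff ha).1 hyW)
    have h := finrank_span_eq_card hli
    rwa [Matrix.range_cons_cons_empty, Fintype.card_fin] at h
  refine ⟨projSub (Submodule.span ℂ {xhat, y}), ⟨⟨_, hrank, rfl⟩, ?_, ?_, ?_⟩, ?_⟩
  · rw [projSub_subset_quadricX]
    intro z hz
    obtain ⟨a, b, rfl⟩ := Submodule.mem_span_pair.1 hz
    rw [quadForm_smul_add, quadForm_smul, hx, hℓX y hyW, map_smul, hy]
    simp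
  · exact (mk_mem_projSub hxhat _).2 (Submodule.subset_span (by simp))
  · exact ⟨Projectivization.mk ℂ y hy0, (mk_mem_projSub hy0 _).2 (Submodule.subset_span (by simp)),
      (mk_mem_projSub hy0 _).2 hyW⟩
  · rintro _ ⟨⟨V, hV, rfl⟩, hVX, hxV, _, hpV, ⟨w, hw0, hwW, rfl⟩⟩
    rw [mk_mem_projSub] at hxV hpV
    rw [projSub_subset_quadricX] at hVX
    -- `xhat + w` lies on the line `V`, hence is isotropic, so `w` is in the kernel of `B xhat`.
    have hw : polarForm xhat w = 0 := by
      have h := quadForm_smul_add 1 xhat w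
      rw [one_smul, hVX _ (V.add_mem hxV hpV), hx, hVX _ hpV] at h
      simpa using h.symm
    obtain ⟨c, rfl⟩ := hgen w hwW hw
    have hc : c ≠ 0 := by rintro rfl; simp at hw0
    have hle : Submodule.span ℂ {xhat, y} ≤ V := by
      rw [Submodule.span_le]
      rintro z (rfl | rfl)
      · exact hxV
      · exact (V.smul_mem_iff hc).1 hpV
    rw [Submodule.eq_of_le_of_finrank_eq hle (hrank.trans hV.symm)]
end
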